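/- Let ε ∈ (0,1) satisfy condition (★). For each z ∈ (0, 4π], there exists a function f_z : (−γ(z), γ(z)) → (0, z^{3/2}] with the following properties: (i) f_z is twice continuously differentiable; (ii) for each s ∈ (−γ(z), γ(z)), f_z''(s) = min{ (36π − f_z'(s)²)/(6 f_z(s)) − (9/2) f_z(s)^{−1/3}, −3ε f_z(s)^{−1/3} }; (iii) f_z(0) = z^{3/2} and f_z'(0) = 0; (iv) lim_{s → γ(z)⁻} f_z(s) = lim_{s → −γ(z)⁺} f_z(s) = 0. -/

import Mathlib

open Real MeasureTheory Set Filter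

/-- `y(z) = z^{1/2}(4π − z)/(2(1−ε))`. -/
noncomputable def yFn (ε z : ℝ) : ℝ := z ^ (1/2 : ℝ) * (4 * π - z) / (2 * (1 - ε))

/-- The comparison function `γ` from the proof of the equality case of Bray's
volume comparison theorem. -/
noncomputable def gammaFn (ε z : ℝ) : ℝ :=
  if z ≤ 4 * π / (3 - 2 * ε) then
    ∫ x in (0:ℝ)..(z ^ (3/2 : ℝ)), (9 * ε * z - 9 * ε * x ^ (2/3 : ℝ)) ^ (-(1/2) : ℝ)
  else
    (∫ x in (0:ℝ)..(yFn ε z),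
        (36 * π - 27 * (1 - ε) * (yFn ε z) ^ (2/3 : ℝ) - 9 * ε * x ^ (2/3 : ℝ)) ^ (-(1/2) : ℝ)) +
    (∫ x in (yFn ε z)..(z ^ (3/2 : ℝ)),
        (36 * π - 18 * (1 - ε) * (yFn ε z) * x ^ (-(1/3) : ℝ) - 9 * x ^ (2/3 : ℝ)) ^ (-(1/2) : ℝ))

/-- Condition (★). -/
def CondStar (ε : ℝ) : Prop :=
  ∀ y z : ℝ, z ∈ Set.Ico (4 * π / (3 - 2 * ε)) (4 * π) →
    2 * (1 - ε) * y = z ^ (1/2 : ℝ) * (4 * π - z) →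
    (∫ x in (0:ℝ)..y,
        (36 * π - 27 * (1 - ε) * y ^ (2/3 : ℝ) - 9 * ε * x ^ (2/3 : ℝ)) ^ (-(1/2) : ℝ)) +
    (∫ x in y..(z ^ (3/2 : ℝ)),
        (36 * π - 18 * (1 - ε) * y * x ^ (-(1/3) : ℝ) - 9 * x ^ (2/3 : ℝ)) ^ (-(1/2) : ℝ))
      < π ^ 2

open scoped Topology

/-!
A solution of Newton's equation `f'' = g(f)` satisfies `f'² = P(f)` with `P' = 2g`, so wherever
`f' > 0` it is the inverse of `x ↦ ∫ P^{-1/2}`. If `P` vanishes at the turning point `b` with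
negative slope, the travel time `T = ∫ₐᵇ P^{-1/2}` is finite, and reflecting the ascent from `a`
to `b` about time `T` gives a `C²` solution on `(-T, T)`.

The equation at hand also involves `f'`, but along a solution `f'²` is a function `P` of `f`, and
the equation becomes the first order equation `P' = 2 min {…}`. Its solution with `P(z^{3/2}) = 0`
is explicit: the second entry of the minimum is active below `y(z)`, the first one above, and the
two pieces are tangent at `y(z)`. If `z ≤ 4π/(3 - 2ε)`, only the second entry is ever active. In
both cases `γ(z)` is the travel time of `P`.
-/

section Calculus

theorem hasDerivAt_of_eventually_hasDerivAt_of_ne {E : Type*} [NormedAddCommGroup E]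
    [NormedSpace ℝ E] {f g : ℝ → E} {x : ℝ} (hderiv : ∀ᶠ y in 𝓝[≠] x, HasDerivAt f (g y) y)
    (hf : ContinuousAt f x) (hg : ContinuousAt g x) : HasDerivAt f (g x) x := by
  have hdiff : DifferentiableOn ℝ f {y | HasDerivAt f (g y) y} :=
    fun y hy ↦ hy.differentiableAt.differentiableWithinAt
  have hlim : Tendsto (deriv f) (𝓝[≠] x) (𝓝 (g x)) :=
    (hg.mono_left nhdsWithin_le_nhds).congr' (hderiv.mono fun y hy ↦ hy.deriv.symm)
  have hright : HasDerivWithinAt f (g x) (Ici x) x :=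
    hasDerivWithinAt_Ici_of_tendsto_deriv hdiff hf.continuousWithinAt
      (nhdsGT_le_nhdsNE x hderiv) (hlim.mono_left (nhdsGT_le_nhdsNE x))
  have hleft : HasDerivWithinAt f (g x) (Iic x) x :=
    hasDerivWithinAt_Iic_of_tendsto_deriv hdiff hf.continuousWithinAt
      (nhdsLT_le_nhdsNE x hderiv) (hlim.mono_left (nhdsLT_le_nhdsNE x))
  simpa using hleft.union hright

theorem hasDerivAt_ite_le {E : Type*} [NormedAddCommGroup E] [NormedSpace ℝ E] {f g : ℝ → E}
    {f' : E} {c x : ℝ} (hc : f c = g c) (hf : x ≤ c → HasDerivAt f f' x)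
    (hg : c ≤ x → HasDerivAt g f' x) : HasDerivAt (fun t ↦ if t ≤ c then f t else g t) f' x := by
  have hleft : EqOn (fun t ↦ if t ≤ c then f t else g t) f (Iic c) := fun t ht ↦ if_pos ht
  have hright : EqOn (fun t ↦ if t ≤ c then f t else g t) g (Ici c) := fun t ht ↦ by
    rcases (mem_Ici.1 ht).eq_or_lt with rfl | h
    · simpa using hc
    · exact if_neg h.not_ge
  rcases lt_trichotomy x c with h | rfl | h
  · exact (hf h.le).congr_of_eventuallyEq (hleft.eventuallyEq_of_mem (Iic_mem_nhds h))
  · simpa using ((hf le_rfl).hasDerivWithinAt.congr hleft (hleft self_mem_Iic)).union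
      ((hg le_rfl).hasDerivWithinAt.congr hright (hright self_mem_Ici))
  · exact (hg h.le).congr_of_eventuallyEq (hright.eventuallyEq_of_mem (Ici_mem_nhds h))

theorem mul_sub_le_of_hasDerivAt_le_neg {P P' : ℝ → ℝ} {a b m : ℝ}
    (hPc : ContinuousOn P (Ioc a b)) (hP : ∀ x ∈ Ioo a b, HasDerivAt P (P' x) x)
    (hP' : ∀ x ∈ Ioo a b, P' x ≤ -m) (hPb : P b = 0) {x : ℝ} (hx : x ∈ Ioc a b) :
    m * (b - x) ≤ P x := by
  have hsub : Ioo x b ⊆ Ioo a b := Ioo_subset_Ioo_left hx.1.le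
  have hslope : P b - P x ≤ -m * (b - x) := by
    refine (convex_Icc x b).image_sub_le_mul_sub_of_deriv_le
      (hPc.mono fun t ht ↦ ⟨hx.1.trans_le ht.1, ht.2⟩) ?_ ?_
      x (left_mem_Icc.2 hx.2) b (right_mem_Icc.2 hx.2) hx.2
    · rw [interior_Icc]
      exact fun t ht ↦ (hP t (hsub ht)).differentiableAt.differentiableWithinAt
    · rw [interior_Icc]
      exact fun t ht ↦ (hP t (hsub ht)).deriv.trans_le (hP' t (hsub ht))
  linarith

theorem intervalIntegrable_rpow_of_mul_sub_le {P : ℝ → ℝ} {a b m r : ℝ} (hab : a ≤ b)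
    (hm : 0 < m) (hr : -1 < r) (hr₀ : r ≤ 0) (hPc : ContinuousOn P (Ioo a b))
    (hP : ∀ x ∈ Ioo a b, m * (b - x) ≤ P x) :
    IntervalIntegrable (fun x ↦ P x ^ r) volume a b := by
  have hlow : ∀ x ∈ Ioo a b, 0 < m * (b - x) := fun x hx ↦ mul_pos hm (sub_pos.2 hx.2)
  have hpos : ∀ x ∈ Ioo a b, 0 < P x := fun x hx ↦ (hlow x hx).trans_le (hP x hx)
  have hdom : IntervalIntegrable (fun x ↦ m ^ r * (b - x) ^ r) volume a b := by
    have := (intervalIntegral.intervalIntegrable_rpow' (a := b - a) (b := 0) hr).comp_sub_left b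
    simpa using this.const_mul (m ^ r)
  rw [intervalIntegrable_iff_integrableOn_Ioo_of_le hab] at hdom ⊢
  have hcont : ContinuousOn (fun x ↦ P x ^ r) (Ioo a b) :=
    hPc.rpow_const fun x hx ↦ .inl (hpos x hx).ne'
  refine Integrable.mono' hdom (hcont.aestronglyMeasurable measurableSet_Ioo)
    (ae_restrict_of_forall_mem measurableSet_Ioo fun x hx ↦ ?_)
  rw [norm_of_nonneg (rpow_nonneg (hpos x hx).le _), ← mul_rpow hm.le (sub_pos.2 hx.2).le]
  exact rpow_le_rpow_of_nonpos (hlow x hx) (hP x hx) hr₀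

theorem intervalIntegral_eq_add_of_eqOn {E : Type*} [NormedAddCommGroup E] [NormedSpace ℝ E]
    {h f g : ℝ → E} {a b c : ℝ} (hac : a ≤ c) (hcb : c ≤ b) (hf : EqOn h f (Ioo a c))
    (hg : EqOn h g (Ioo c b)) (hint : IntervalIntegrable h volume a b) :
    ∫ x in a..b, h x = (∫ x in a..c, f x) + ∫ x in c..b, g x := by
  have hc : c ∈ uIcc a b := uIcc_of_le (hac.trans hcb) ▸ ⟨hac, hcb⟩
  rw [← intervalIntegral.integral_add_adjacent_intervals
      (hint.mono_set (uIcc_subset_uIcc_left hc)) (hint.mono_set (uIcc_subset_uIcc_right hc)),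
    intervalIntegral.integral_congr_Ioo_of_le hac hf,
    intervalIntegral.integral_congr_Ioo_of_le hcb hg]

end Calculus

section Primitive

theorem exists_orderIso_primitive_one_add {k : ℝ → ℝ} (hk : Integrable k)
    (hpos : ∀ x, 0 < 1 + k x) (a : ℝ) :
    ∃ e : ℝ ≃o ℝ, ∀ x, e x = ∫ t in a..x, (1 + k t) := by
  have hint : ∀ c d, IntervalIntegrable (fun t ↦ 1 + k t) volume c d := fun c d ↦
    intervalIntegrable_const.add hk.intervalIntegrable
  set F : ℝ → ℝ := fun x ↦ ∫ t in a..x, (1 + k t)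
  have hmono : StrictMono F := fun c d hcd ↦ by
    rw [← sub_pos, intervalIntegral.integral_interval_sub_left (hint _ _) (hint _ _)]
    exact intervalIntegral.intervalIntegral_pos_of_pos (hint c d) hpos hcd
  have hdist : ∀ x, |F x - (x - a)| ≤ ∫ t, ‖k t‖ := fun x ↦ by
    have hF : F x - (x - a) = ∫ t in a..x, k t := by
      simp [F, intervalIntegral.integral_add intervalIntegrable_const hk.intervalIntegrable]
    rw [hF, ← norm_eq_abs]
    exact intervalIntegral.norm_integral_le_integral_norm_uIoc.trans
      (setIntegral_le_integral hk.norm (.of_forall fun _ ↦ norm_nonneg _))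
  have hsurj : Function.Surjective F := by
    refine (intervalIntegral.continuous_primitive hint a).surjective ?_ ?_
    · refine tendsto_atTop_mono (f := fun x ↦ x + (-a - ∫ t, ‖k t‖)) (fun x ↦ ?_)
        (tendsto_atTop_add_const_right atTop _ tendsto_id)
      linarith [(abs_le.1 (hdist x)).1]
    · refine tendsto_atBot_mono (f := fun x ↦ x + (-a + ∫ t, ‖k t‖)) (fun x ↦ ?_)
        (tendsto_atBot_add_const_right atBot _ tendsto_id)
      linarith [(abs_le.1 (hdist x)).2]
  exact ⟨hmono.orderIsoOfSurjective F hsurj, fun x ↦ rfl⟩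

theorem exists_orderIso_hasDerivAt {h : ℝ → ℝ} {a b : ℝ} (hab : a ≤ b)
    (hpos : ∀ x ∈ Ioo a b, 0 < h x) (hcont : ContinuousOn h (Ioo a b))
    (hint : IntervalIntegrable h volume a b) :
    ∃ e : ℝ ≃o ℝ, e a = 0 ∧ e b = (∫ x in a..b, h x) ∧ ∀ x ∈ Ioo a b, HasDerivAt e (h x) x := by
  set k : ℝ → ℝ := (Ioo a b).indicator fun x ↦ h x - 1
  have hk_eq : EqOn (fun x ↦ 1 + k x) h (Ioo a b) := fun x hx ↦ by simp [k, hx]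
  have hk_pos : ∀ x, 0 < 1 + k x := fun x ↦ by
    by_cases hx : x ∈ Ioo a b
    · exact (hpos x hx).trans_eq (hk_eq hx).symm
    · simp [k, hx]
  have hk : Integrable k := by
    rw [integrable_indicator_iff measurableSet_Ioo,
      ← intervalIntegrable_iff_integrableOn_Ioo_of_le hab]
    exact hint.sub intervalIntegrable_const
  obtain ⟨e, he⟩ := exists_orderIso_primitive_one_add hk hk_pos a
  refine ⟨e, by simp [he], (he b).trans (intervalIntegral.integral_congr_Ioo_of_le hab hk_eq),
    fun x hx ↦ ?_⟩
  have hcont_x : ContinuousAt (fun x ↦ 1 + k x) x :=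
    (hcont.continuousAt (isOpen_Ioo.mem_nhds hx)).congr
      (hk_eq.eventuallyEq_of_mem (isOpen_Ioo.mem_nhds hx)).symm
  rw [← hk_eq hx, funext he]
  exact intervalIntegral.integral_hasDerivAt_right
    (intervalIntegrable_const.add hk.intervalIntegrable)
    (aestronglyMeasurable_const.add hk.aestronglyMeasurable).stronglyMeasurableAtFilter hcont_x

end Primitive

section Newton

/-- The time needed to travel from `a` to `b` for a particle whose squared speed at position `x`
is `P x`. -/
noncomputable def travelTime (P : ℝ → ℝ) (a b : ℝ) : ℝ := ∫ x in a..b, P x ^ (-(1 / 2) : ℝ)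

/-- `u` describes a particle that moves from `a` to `b` during the time interval `[0, T]`, with
squared speed `P x` at position `x`. Making `u` an order isomorphism of `ℝ` amounts to an
irrelevant choice of its values outside `[0, T]`, and provides continuity and monotonicity. -/
structure IsAscent (P : ℝ → ℝ) (a b T : ℝ) (u : ℝ ≃o ℝ) : Prop where
  map_zero : u 0 = a
  map_time : u T = b
  hasDerivAt : ∀ t ∈ Ioo 0 T, HasDerivAt u (√(P (u t))) t

/-- The motion on `[-T, T]` that follows `u` for a time `T` and then retraces it backwards. -/
def reflect (u : ℝ → ℝ) (T s : ℝ) : ℝ := u (T - |s|)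

/-- The velocity of `reflect u T` when the squared speed at position `x` is `P x`. -/
noncomputable def reflectVelocity (P u : ℝ → ℝ) (T s : ℝ) : ℝ :=
  -(SignType.sign s : ℝ) * √(P (reflect u T s))

variable {P g : ℝ → ℝ} {a b T s : ℝ} {u : ℝ ≃o ℝ}

theorem exists_isAscent (hab : a ≤ b) (hcont : ContinuousOn P (Ioo a b))
    (hpos : ∀ x ∈ Ioo a b, 0 < P x)
    (hint : IntervalIntegrable (fun x ↦ P x ^ (-(1 / 2) : ℝ)) volume a b) :
    ∃ u, IsAscent P a b (travelTime P a b) u := by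
  obtain ⟨e, hea, heb, he⟩ := exists_orderIso_hasDerivAt hab
    (fun x hx ↦ rpow_pos_of_pos (hpos x hx) _)
    (hcont.rpow_const fun x hx ↦ .inl (hpos x hx).ne') hint
  have hsymm_zero : e.symm 0 = a := by rw [← hea, e.symm_apply_apply]
  have hsymm_time : e.symm (travelTime P a b) = b := by
    rw [travelTime, ← heb, e.symm_apply_apply]
  refine ⟨e.symm, hsymm_zero, hsymm_time, fun t ht ↦ ?_⟩
  have hmem : e.symm t ∈ Ioo a b :=
    ⟨hsymm_zero ▸ e.symm.strictMono ht.1, hsymm_time ▸ e.symm.strictMono ht.2⟩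
  have hinv := (he _ hmem).of_local_left_inverse e.symm.continuous.continuousAt
    (rpow_pos_of_pos (hpos _ hmem) _).ne' (.of_forall e.apply_symm_apply)
  rwa [rpow_neg (hpos _ hmem).le, inv_inv, ← sqrt_eq_rpow] at hinv

theorem sign_sq_of_ne_zero (hs : s ≠ 0) : (SignType.sign s : ℝ) ^ 2 = 1 := by
  rcases hs.lt_or_gt with h | h <;> simp [h]

theorem reflectVelocity_zero {u : ℝ → ℝ} : reflectVelocity P u T 0 = 0 := by
  simp [reflectVelocity]

theorem continuous_reflect (u : ℝ ≃o ℝ) (T : ℝ) : Continuous (reflect u T) :=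
  u.continuous.comp (by fun_prop)

namespace IsAscent

theorem time_nonneg (hu : IsAscent P a b T u) (hab : a ≤ b) : 0 ≤ T :=
  u.le_iff_le.1 (by rwa [hu.map_zero, hu.map_time])

theorem reflect_zero (hu : IsAscent P a b T u) : reflect u T 0 = b := by
  simp [reflect, hu.map_time]

theorem reflect_mem_Ioc (hu : IsAscent P a b T u) (hs : s ∈ Ioo (-T) T) :
    reflect u T s ∈ Ioc a b := by
  rw [← hu.map_zero, ← hu.map_time]
  exact ⟨u.strictMono (sub_pos.2 (abs_lt.2 hs)), u.monotone (sub_le_self _ (abs_nonneg s))⟩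

theorem reflect_mem_Ioo (hu : IsAscent P a b T u) (hs : s ∈ Ioo (-T) T) (hs₀ : s ≠ 0) :
    reflect u T s ∈ Ioo a b :=
  ⟨(hu.reflect_mem_Ioc hs).1, hu.map_time ▸ u.strictMono (sub_lt_self _ (abs_pos.2 hs₀))⟩

theorem tendsto_reflect_time (hu : IsAscent P a b T u) (hab : a ≤ b) :
    Tendsto (reflect u T) (𝓝[Ioo (-T) T] T) (𝓝 a) := by
  have h : reflect u T T = a := by
    rw [reflect, abs_of_nonneg (hu.time_nonneg hab), sub_self, hu.map_zero]
  exact h ▸ (continuous_reflect u T).continuousWithinAt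

theorem tendsto_reflect_neg_time (hu : IsAscent P a b T u) (hab : a ≤ b) :
    Tendsto (reflect u T) (𝓝[Ioo (-T) T] (-T)) (𝓝 a) := by
  have h : reflect u T (-T) = a := by
    rw [reflect, abs_neg, abs_of_nonneg (hu.time_nonneg hab), sub_self, hu.map_zero]
  exact h ▸ (continuous_reflect u T).continuousWithinAt

theorem reflectVelocity_sq (hu : IsAscent P a b T u) (hpos : ∀ x ∈ Ioo a b, 0 < P x)
    (hPb : P b = 0) (hs : s ∈ Ioo (-T) T) : reflectVelocity P u T s ^ 2 = P (reflect u T s) := by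
  rcases eq_or_ne s 0 with rfl | hs₀
  · simp [reflectVelocity_zero, hu.reflect_zero, hPb]
  · rw [reflectVelocity, mul_pow, neg_sq, sign_sq_of_ne_zero hs₀, one_mul,
      sq_sqrt (hpos _ (hu.reflect_mem_Ioo hs hs₀)).le]

theorem hasDerivAt_reflect_of_ne (hu : IsAscent P a b T u) (hs : s ∈ Ioo (-T) T) (hs₀ : s ≠ 0) :
    HasDerivAt (reflect u T) (reflectVelocity P u T s) s := by
  have ht : T - |s| ∈ Ioo 0 T := ⟨sub_pos.2 (abs_lt.2 hs), sub_lt_self _ (abs_pos.2 hs₀)⟩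
  exact ((hu.hasDerivAt _ ht).comp s ((hasDerivAt_abs hs₀).const_sub T)).congr_deriv
    (mul_comm _ _)

theorem continuousAt_reflectVelocity_zero (hu : IsAscent P a b T u) (hT : 0 < T)
    (hPc : ContinuousOn P (Ioc a b)) (hPb : P b = 0) :
    ContinuousAt (reflectVelocity P u T) 0 := by
  have hPu : ContinuousAt (fun s ↦ √(P (reflect u T s))) 0 :=
    ((hPc.comp (continuous_reflect u T).continuousOn fun s ↦ hu.reflect_mem_Ioc).continuousAt
      (Ioo_mem_nhds (neg_lt_zero.2 hT) hT)).sqrt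
  have hlim : Tendsto (fun s ↦ √(P (reflect u T s))) (𝓝 0) (𝓝 0) := by
    simpa [hu.reflect_zero, hPb] using hPu.tendsto
  rw [ContinuousAt, reflectVelocity_zero]
  refine squeeze_zero_norm (fun s ↦ ?_) hlim
  rw [reflectVelocity, norm_mul, norm_of_nonneg (sqrt_nonneg _)]
  refine mul_le_of_le_one_left (sqrt_nonneg _) ?_
  rcases lt_trichotomy s 0 with h | rfl | h <;> simp [*]

theorem hasDerivAt_reflect (hu : IsAscent P a b T u) (hPc : ContinuousOn P (Ioc a b))
    (hPb : P b = 0) (hs : s ∈ Ioo (-T) T) :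
    HasDerivAt (reflect u T) (reflectVelocity P u T s) s := by
  rcases eq_or_ne s 0 with rfl | hs₀
  · refine hasDerivAt_of_eventually_hasDerivAt_of_ne ?_ (continuous_reflect u T).continuousAt
      (hu.continuousAt_reflectVelocity_zero hs.2 hPc hPb)
    filter_upwards [mem_nhdsWithin_of_mem_nhds (isOpen_Ioo.mem_nhds hs), self_mem_nhdsWithin]
      with t ht ht₀ using hu.hasDerivAt_reflect_of_ne ht ht₀
  · exact hu.hasDerivAt_reflect_of_ne hs hs₀

theorem hasDerivAt_reflectVelocity_of_ne (hu : IsAscent P a b T u)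
    (hpos : ∀ x ∈ Ioo a b, 0 < P x) (hP : ∀ x ∈ Ioo a b, HasDerivAt P (2 * g x) x)
    (hs : s ∈ Ioo (-T) T) (hs₀ : s ≠ 0) :
    HasDerivAt (reflectVelocity P u T) (g (reflect u T s)) s := by
  have hmem := hu.reflect_mem_Ioo hs hs₀
  have hsqrt : 0 < √(P (reflect u T s)) := sqrt_pos.2 (hpos _ hmem)
  have hsign : HasDerivAt (fun t : ℝ ↦ -(SignType.sign t : ℝ)) 0 s := by
    refine (hasDerivAt_const s (-(SignType.sign s : ℝ))).congr_of_eventuallyEq ?_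
    filter_upwards [(continuousAt_sign_of_ne_zero hs₀).eventually_mem
      (isOpen_discrete {SignType.sign s} |>.mem_nhds rfl)] with t ht
    rw [mem_singleton_iff.1 ht]
  have hspeed := ((hP _ hmem).comp s (hu.hasDerivAt_reflect_of_ne hs hs₀)).sqrt (hpos _ hmem).ne'
  refine (hsign.mul hspeed).congr_deriv ?_
  rw [reflectVelocity, Function.comp_apply]
  field_simp
  linear_combination g (reflect u T s) * sign_sq_of_ne_zero hs₀

theorem hasDerivAt_reflectVelocity (hu : IsAscent P a b T u) (hPc : ContinuousOn P (Ioc a b))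
    (hPb : P b = 0) (hpos : ∀ x ∈ Ioo a b, 0 < P x)
    (hP : ∀ x ∈ Ioo a b, HasDerivAt P (2 * g x) x) (hg : ContinuousOn g (Ioc a b))
    (hs : s ∈ Ioo (-T) T) : HasDerivAt (reflectVelocity P u T) (g (reflect u T s)) s := by
  rcases eq_or_ne s 0 with rfl | hs₀
  · have hgu : ContinuousAt (fun s ↦ g (reflect u T s)) 0 :=
      (hg.comp (continuous_reflect u T).continuousOn fun s ↦ hu.reflect_mem_Ioc).continuousAt
        (isOpen_Ioo.mem_nhds hs)
    refine hasDerivAt_of_eventually_hasDerivAt_of_ne ?_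
      (hu.continuousAt_reflectVelocity_zero hs.2 hPc hPb) hgu
    filter_upwards [mem_nhdsWithin_of_mem_nhds (isOpen_Ioo.mem_nhds hs), self_mem_nhdsWithin]
      with t ht ht₀ using hu.hasDerivAt_reflectVelocity_of_ne hpos hP ht ht₀
  · exact hu.hasDerivAt_reflectVelocity_of_ne hpos hP hs hs₀

end IsAscent

end Newton

section Bray

/-- The right hand side of the differential equation, as a function of the position `x = f` and
the squared velocity `p = f'²`. -/
noncomputable def brayAccel (ε x p : ℝ) : ℝ :=
  min ((36 * π - p) / (6 * x) - (9 / 2) * x ^ (-(1 / 3) : ℝ)) (-3 * ε * x ^ (-(1 / 3) : ℝ))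

/-- `P` expresses the squared velocity of a solution in terms of its position, down from the
turning point `M`: the equation `f'' = brayAccel ε f (f'²)` becomes `P' = 2 brayAccel ε x P`. -/
structure IsBrayProfile (ε M : ℝ) (P : ℝ → ℝ) : Prop where
  hasDerivAt : ∀ x ∈ Ioc 0 M, HasDerivAt P (2 * brayAccel ε x (P x)) x
  apply_right : P M = 0

variable {ε M x y z : ℝ} {P : ℝ → ℝ}

theorem mul_rpow_neg_one_third (hx : 0 ≤ x) : x * x ^ (-(1 / 3) : ℝ) = x ^ (2 / 3 : ℝ) := by
  rw [← rpow_one_add' hx (by norm_num)]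
  norm_num

theorem hasDerivAt_rpow_const_div (hx : 0 < x) (r : ℝ) :
    HasDerivAt (fun t ↦ t ^ r) (r * x ^ r / x) x := by
  rw [mul_div_assoc, ← rpow_sub_one hx.ne']
  exact hasDerivAt_rpow_const (.inl hx.ne')

theorem brayAccel_eq_div (hx : 0 < x) (p : ℝ) :
    brayAccel ε x p =
      min (36 * π - p - 27 * x ^ (2 / 3 : ℝ)) (-18 * ε * x ^ (2 / 3 : ℝ)) / (6 * x) := by
  rw [← min_div_div_right (by positivity), brayAccel, ← mul_rpow_neg_one_third hx.le]
  congr 1 <;> field_simp <;> ring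

namespace IsBrayProfile

theorem continuousOn (hP : IsBrayProfile ε M P) : ContinuousOn P (Ioc 0 M) :=
  fun x hx ↦ (hP.hasDerivAt x hx).continuousAt.continuousWithinAt

theorem continuousOn_brayAccel (hP : IsBrayProfile ε M P) :
    ContinuousOn (fun x ↦ brayAccel ε x (P x)) (Ioc 0 M) := by
  have hpow : ContinuousOn (fun x : ℝ ↦ x ^ (-(1 / 3) : ℝ)) (Ioc 0 M) :=
    continuousOn_id.rpow_const fun x hx ↦ .inl hx.1.ne'
  have hdiv : ContinuousOn (fun x ↦ (36 * π - P x) / (6 * x)) (Ioc 0 M) :=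
    (continuousOn_const.sub hP.continuousOn).div (by fun_prop)
      fun x hx ↦ mul_ne_zero (by norm_num) hx.1.ne'
  exact (hdiv.sub (hpow.const_mul (9 / 2))).inf (hpow.const_mul (-3 * ε))

theorem mul_sub_le (hP : IsBrayProfile ε M P) (hε : 0 ≤ ε) (hx : x ∈ Ioc 0 M) :
    6 * ε * M ^ (-(1 / 3) : ℝ) * (M - x) ≤ P x := by
  refine mul_sub_le_of_hasDerivAt_le_neg hP.continuousOn
    (fun t ht ↦ hP.hasDerivAt t (Ioo_subset_Ioc_self ht)) (fun t ht ↦ ?_) hP.apply_right hx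
  have hpow : M ^ (-(1 / 3) : ℝ) ≤ t ^ (-(1 / 3) : ℝ) :=
    rpow_le_rpow_of_nonpos ht.1 ht.2.le (by norm_num)
  calc 2 * brayAccel ε t (P t) ≤ 2 * (-3 * ε * t ^ (-(1 / 3) : ℝ)) := by
        gcongr; exact min_le_right _ _
    _ = -(6 * ε * t ^ (-(1 / 3) : ℝ)) := by ring
    _ ≤ -(6 * ε * M ^ (-(1 / 3) : ℝ)) := by gcongr

theorem pos (hP : IsBrayProfile ε M P) (hε : 0 < ε) (hx : x ∈ Ioo 0 M) : 0 < P x := by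
  have hM : 0 < M := hx.1.trans hx.2
  have hMx : 0 < M - x := sub_pos.2 hx.2
  exact lt_of_lt_of_le (by positivity) (hP.mul_sub_le hε.le (Ioo_subset_Ioc_self hx))

theorem intervalIntegrable (hP : IsBrayProfile ε M P) (hε : 0 < ε) (hM : 0 < M) :
    IntervalIntegrable (fun x ↦ P x ^ (-(1 / 2) : ℝ)) volume 0 M :=
  intervalIntegrable_rpow_of_mul_sub_le hM.le (by positivity : 0 < 6 * ε * M ^ (-(1 / 3) : ℝ))
    (by norm_num) (by norm_num) (hP.continuousOn.mono Ioo_subset_Ioc_self)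
    fun _ hx ↦ hP.mul_sub_le hε.le (Ioo_subset_Ioc_self hx)

end IsBrayProfile

theorem hasDerivAt_brayAccel_right {K : ℝ} (hx : 0 < x)
    (hK : K + 27 * (1 - ε) * x ^ (2 / 3 : ℝ) ≤ 36 * π) :
    HasDerivAt (fun t ↦ K - 9 * ε * t ^ (2 / 3 : ℝ))
      (2 * brayAccel ε x (K - 9 * ε * x ^ (2 / 3 : ℝ))) x := by
  rw [brayAccel_eq_div hx, min_eq_right (by linarith)]
  refine (((hasDerivAt_rpow_const_div hx _).const_mul (9 * ε)).const_sub K).congr_deriv ?_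
  ring

theorem hasDerivAt_brayAccel_left (hε : ε ≤ 1) (hx : 0 < x) (hyx : y ≤ x) :
    HasDerivAt
      (fun t ↦ 36 * π - 18 * (1 - ε) * y * t ^ (-(1 / 3) : ℝ) - 9 * t ^ (2 / 3 : ℝ))
      (2 * brayAccel ε x
        (36 * π - 18 * (1 - ε) * y * x ^ (-(1 / 3) : ℝ) - 9 * x ^ (2 / 3 : ℝ))) x := by
  have hle : (1 - ε) * (y * x ^ (-(1 / 3) : ℝ)) ≤ (1 - ε) * x ^ (2 / 3 : ℝ) := by
    rw [← mul_rpow_neg_one_third hx.le]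
    gcongr
  rw [brayAccel_eq_div hx, min_eq_left (by linarith)]
  refine ((((hasDerivAt_rpow_const_div hx _).const_mul (18 * (1 - ε) * y)).const_sub _).sub
    ((hasDerivAt_rpow_const_div hx _).const_mul 9)).congr_deriv ?_
  field_simp
  ring

theorem rpow_three_halves_rpow_two_thirds (hz : 0 ≤ z) :
    (z ^ (3 / 2 : ℝ)) ^ (2 / 3 : ℝ) = z := by
  rw [← rpow_mul hz]
  norm_num

theorem isBrayProfile_of_le (hε : ε ≤ 1) (hz₀ : 0 ≤ z) (hz : (3 - 2 * ε) * z ≤ 4 * π) :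
    IsBrayProfile ε (z ^ (3 / 2 : ℝ)) fun x ↦ 9 * ε * z - 9 * ε * x ^ (2 / 3 : ℝ) := by
  refine ⟨fun x hx ↦ hasDerivAt_brayAccel_right hx.1 ?_, ?_⟩
  · have hxz : x ^ (2 / 3 : ℝ) ≤ z := by
      calc x ^ (2 / 3 : ℝ) ≤ (z ^ (3 / 2 : ℝ)) ^ (2 / 3 : ℝ) :=
            rpow_le_rpow hx.1.le hx.2 (by norm_num)
        _ = z := rpow_three_halves_rpow_two_thirds hz₀
    linarith [mul_le_mul_of_nonneg_left hxz (sub_nonneg.2 hε)]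
  · simp only [rpow_three_halves_rpow_two_thirds hz₀, sub_self]

/-- The profile that switches at position `y` from the second entry of the minimum in `brayAccel`
to the first one. -/
noncomputable def switchProfile (ε y x : ℝ) : ℝ :=
  if x ≤ y then 36 * π - 27 * (1 - ε) * y ^ (2 / 3 : ℝ) - 9 * ε * x ^ (2 / 3 : ℝ)
  else 36 * π - 18 * (1 - ε) * y * x ^ (-(1 / 3) : ℝ) - 9 * x ^ (2 / 3 : ℝ)

theorem hasDerivAt_switchProfile (hε : ε ≤ 1) (hy : 0 ≤ y) (hx : 0 < x) :
    HasDerivAt (switchProfile ε y) (2 * brayAccel ε x (switchProfile ε y x)) x := by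
  have hjoin : 36 * π - 27 * (1 - ε) * y ^ (2 / 3 : ℝ) - 9 * ε * y ^ (2 / 3 : ℝ) =
      36 * π - 18 * (1 - ε) * y * y ^ (-(1 / 3) : ℝ) - 9 * y ^ (2 / 3 : ℝ) := by
    rw [← mul_rpow_neg_one_third hy]
    ring
  refine hasDerivAt_ite_le hjoin (fun hxy ↦ ?_) fun hyx ↦ ?_
  · rw [switchProfile, if_pos hxy]
    refine hasDerivAt_brayAccel_right hx ?_
    have hpow : x ^ (2 / 3 : ℝ) ≤ y ^ (2 / 3 : ℝ) := rpow_le_rpow hx.le hxy (by norm_num)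
    linarith [mul_le_mul_of_nonneg_left hpow (sub_nonneg.2 hε)]
  · have hval : switchProfile ε y x =
        36 * π - 18 * (1 - ε) * y * x ^ (-(1 / 3) : ℝ) - 9 * x ^ (2 / 3 : ℝ) := by
      rcases hyx.eq_or_lt with rfl | hyx
      · rw [switchProfile, if_pos le_rfl, hjoin]
      · rw [switchProfile, if_neg hyx.not_ge]
    rw [hval]
    exact hasDerivAt_brayAccel_left hε hx hyx

theorem yFn_nonneg (hε : ε ≤ 1) (hz₀ : 0 ≤ z) (hz : z ≤ 4 * π) : 0 ≤ yFn ε z :=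
  div_nonneg (mul_nonneg (rpow_nonneg hz₀ _) (sub_nonneg.2 hz)) (by linarith)

theorem yFn_lt (hε : ε < 1) (hz₀ : 0 < z) (hz : 4 * π < (3 - 2 * ε) * z) :
    yFn ε z < z ^ (3 / 2 : ℝ) := by
  have hpow : z ^ (3 / 2 : ℝ) = z ^ (1 / 2 : ℝ) * z := by
    rw [← rpow_add_one hz₀.ne']
    norm_num
  rw [yFn, div_lt_iff₀ (by linarith), hpow, mul_assoc]
  have := rpow_pos_of_pos hz₀ (1 / 2)
  gcongr
  linarith

theorem isBrayProfile_switchProfile (hε : ε < 1) (hz : 4 * π < (3 - 2 * ε) * z)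
    (hz₄ : z ≤ 4 * π) (hz₀ : 0 < z) :
    IsBrayProfile ε (z ^ (3 / 2 : ℝ)) (switchProfile ε (yFn ε z)) := by
  refine ⟨fun x hx ↦ hasDerivAt_switchProfile hε.le (yFn_nonneg hε.le hz₀.le hz₄) hx.1, ?_⟩
  have hinv : (z ^ (3 / 2 : ℝ)) ^ (-(1 / 3) : ℝ) = (z ^ (1 / 2 : ℝ))⁻¹ := by
    rw [← rpow_mul hz₀.le, ← rpow_neg hz₀.le]
    norm_num
  have hy : 18 * (1 - ε) * yFn ε z * (z ^ (1 / 2 : ℝ))⁻¹ = 9 * (4 * π - z) := by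
    have h1 : 1 - ε ≠ 0 := (sub_pos.2 hε).ne'
    have h2 : z ^ (1 / 2 : ℝ) ≠ 0 := (rpow_pos_of_pos hz₀ _).ne'
    rw [yFn]
    field_simp
    ring
  rw [switchProfile, if_neg (yFn_lt hε hz₀ hz).not_ge, hinv, hy,
    rpow_three_halves_rpow_two_thirds hz₀.le]
  ring

theorem exists_isBrayProfile (hε : ε ∈ Ioc 0 1) (hz : z ∈ Ioc 0 (4 * π)) :
    ∃ P, IsBrayProfile ε (z ^ (3 / 2 : ℝ)) P ∧ gammaFn ε z = travelTime P 0 (z ^ (3 / 2 : ℝ)) := by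
  have hden : 0 < 3 - 2 * ε := by linarith [hε.2]
  by_cases h : z ≤ 4 * π / (3 - 2 * ε)
  · exact ⟨_, isBrayProfile_of_le hε.2 hz.1.le ((le_div_iff₀' hden).1 h), if_pos h⟩
  · have hlt : 4 * π < (3 - 2 * ε) * z := (div_lt_iff₀' hden).1 (not_le.1 h)
    have hε₁ : ε < 1 := by
      by_contra! h₁
      exact hlt.not_ge ((mul_le_of_le_one_left hz.1.le (by linarith)).trans hz.2)
    have hP := isBrayProfile_switchProfile hε₁ hlt hz.2 hz.1
    refine ⟨_, hP, (if_neg h).trans (intervalIntegral_eq_add_of_eqOn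
      (yFn_nonneg hε.2 hz.1.le hz.2) (yFn_lt hε₁ hz.1 hlt).le (fun x hx ↦ ?_) (fun x hx ↦ ?_)
      (hP.intervalIntegrable hε.1 (rpow_pos_of_pos hz.1 _))).symm⟩
    · simp only [switchProfile, if_pos hx.2.le]
    · simp only [switchProfile, if_neg hx.1.not_ge]

end Bray

theorem stmt_5_general (ε : ℝ) (hε : ε ∈ Ioc 0 1) (z : ℝ) (hz : z ∈ Ioc 0 (4 * π)) :
    ∃ f f' f'' : ℝ → ℝ,
      (∀ s ∈ Ioo (-gammaFn ε z) (gammaFn ε z), f s ∈ Ioc 0 (z ^ (3 / 2 : ℝ))) ∧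
      (∀ s ∈ Ioo (-gammaFn ε z) (gammaFn ε z), HasDerivAt f (f' s) s) ∧
      (∀ s ∈ Ioo (-gammaFn ε z) (gammaFn ε z), HasDerivAt f' (f'' s) s) ∧
      ContinuousOn f'' (Ioo (-gammaFn ε z) (gammaFn ε z)) ∧
      (∀ s ∈ Ioo (-gammaFn ε z) (gammaFn ε z),
        f'' s = min ((36 * π - f' s ^ 2) / (6 * f s) - (9 / 2) * f s ^ (-(1 / 3) : ℝ))
          (-3 * ε * f s ^ (-(1 / 3) : ℝ))) ∧
      f 0 = z ^ (3 / 2 : ℝ) ∧ f' 0 = 0 ∧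
      Tendsto f (𝓝[Ioo (-gammaFn ε z) (gammaFn ε z)] (gammaFn ε z)) (𝓝 0) ∧
      Tendsto f (𝓝[Ioo (-gammaFn ε z) (gammaFn ε z)] (-gammaFn ε z)) (𝓝 0) := by
  obtain ⟨P, hP, hγ⟩ := exists_isBrayProfile hε hz
  have hM : 0 < z ^ (3 / 2 : ℝ) := rpow_pos_of_pos hz.1 _
  have hpos : ∀ x ∈ Ioo 0 (z ^ (3 / 2 : ℝ)), 0 < P x := fun x hx ↦ hP.pos hε.1 hx
  obtain ⟨u, hu⟩ := exists_isAscent hM.le (hP.continuousOn.mono Ioo_subset_Ioc_self) hpos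
    (hP.intervalIntegrable hε.1 hM)
  rw [hγ]
  have hP' := fun x hx ↦ hP.hasDerivAt x (Ioo_subset_Ioc_self hx)
  exact ⟨reflect u _, reflectVelocity P u _,
    fun s ↦ brayAccel ε (reflect u _ s) (P (reflect u _ s)),
    fun s ↦ hu.reflect_mem_Ioc,
    fun s ↦ hu.hasDerivAt_reflect hP.continuousOn hP.apply_right,
    fun s ↦ hu.hasDerivAt_reflectVelocity hP.continuousOn hP.apply_right hpos hP'
      hP.continuousOn_brayAccel,
    hP.continuousOn_brayAccel.comp (continuous_reflect u _).continuousOn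
      fun s ↦ hu.reflect_mem_Ioc,
    fun s hs ↦ by rw [hu.reflectVelocity_sq hpos hP.apply_right hs]; rfl,
    hu.reflect_zero, reflectVelocity_zero, hu.tendsto_reflect_time hM.le,
    hu.tendsto_reflect_neg_time hM.le⟩

/-- Existence of the comparison function `f_z` on `(−γ(z), γ(z))`: twice continuously
differentiable, taking values in `(0, z^{3/2}]`, satisfying the ODE
`f'' = min{(36π − (f')²)/(6f) − (9/2) f^{−1/3}, −3ε f^{−1/3}}`,
with `f(0) = z^{3/2}`, `f'(0) = 0`, and `f → 0` at both endpoints. -/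
theorem stmt_5 (ε : ℝ) (hε : ε ∈ Set.Ioo (0:ℝ) 1) (hstar : CondStar ε)
    (z : ℝ) (hz : z ∈ Set.Ioc (0:ℝ) (4 * π)) :
    ∃ f f' f'' : ℝ → ℝ,
      (∀ s ∈ Set.Ioo (-(gammaFn ε z)) (gammaFn ε z), f s ∈ Set.Ioc (0:ℝ) (z ^ (3/2 : ℝ))) ∧
      (∀ s ∈ Set.Ioo (-(gammaFn ε z)) (gammaFn ε z), HasDerivAt f (f' s) s) ∧
      (∀ s ∈ Set.Ioo (-(gammaFn ε z)) (gammaFn ε z), HasDerivAt f' (f'' s) s) ∧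
      ContinuousOn f'' (Set.Ioo (-(gammaFn ε z)) (gammaFn ε z)) ∧
      (∀ s ∈ Set.Ioo (-(gammaFn ε z)) (gammaFn ε z),
        f'' s = min ((36 * π - (f' s) ^ 2) / (6 * f s) - (9/2) * (f s) ^ (-(1/3) : ℝ))
                    (-3 * ε * (f s) ^ (-(1/3) : ℝ))) ∧
      f 0 = z ^ (3/2 : ℝ) ∧ f' 0 = 0 ∧
      Filter.Tendsto f
        (nhdsWithin (gammaFn ε z) (Set.Ioo (-(gammaFn ε z)) (gammaFn ε z))) (nhds 0) ∧
      Filter.Tendsto f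
        (nhdsWithin (-(gammaFn ε z)) (Set.Ioo (-(gammaFn ε z)) (gammaFn ε z))) (nhds 0) := by
  exact stmt_5_general ε (Ioo_subset_Ioc_self hε) z hz
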